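/- There exists a universal constant c > 0 with the following property. Let n be a positive integer, let ρ₁ ≥ ρ₂ > 0, set ρ = ρ₂/ρ₁, and let R > 0 satisfy R < (ρ₁² + ρ₂²)^{1/2}. Then λ({ (x, y) ∈ ℝⁿ × ℝⁿ : |x| ≤ ρ₁, |y| ≤ ρ₂, |x + y| ≤ R }) ≤ (1 − c·min{ρ√n, 1})·λ(ρ₁Bⁿ)·λ(ρ₂Bⁿ), where |·| denotes the Euclidean norm. -/

import Mathlib

open MeasureTheory

section ConeBounds

open Module Metric Set
open scoped Pointwise RealInnerProductSpace

/-- Vectors in thin outer shells of two balls whose angle is slightly acute have a long sum. -/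
theorem add_sq_le_norm_add_sq {E : Type*} [NormedAddCommGroup E]
    [InnerProductSpace ℝ E] {x y : E} {ρ₁ ρ₂ s : ℝ} (hρ₂ : 0 < ρ₂) (hρ : ρ₂ ≤ ρ₁)
    (hs : 1 ≤ s) (hx : (1 - ρ₂ / (128 * s * ρ₁)) * ρ₁ ≤ ‖x‖)
    (hy : (1 - 1 / (128 * s)) * ρ₂ ≤ ‖y‖) (hxy : ‖x‖ * ‖y‖ ≤ 16 * s * ⟪x, y⟫) :
    ρ₁ ^ 2 + ρ₂ ^ 2 ≤ ‖x + y‖ ^ 2 := by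
  have hρ₁ : 0 < ρ₁ := hρ₂.trans_le hρ
  set e : ℝ := 1 / (128 * s) with he
  have he0 : 0 < e := by positivity
  have hes : e * s = 1 / 128 := by rw [he]; field_simp
  have he1 : e ≤ 1 / 128 := by nlinarith
  have hx' : ρ₁ - e * ρ₂ ≤ ‖x‖ := by
    convert hx using 1
    rw [he]
    field_simp
  have hy' : ρ₂ - e * ρ₂ ≤ ‖y‖ := by linarith
  have hx2 : ρ₁ / 2 ≤ ρ₁ - e * ρ₂ := by nlinarith
  have hy2 : ρ₂ / 2 ≤ ρ₂ - e * ρ₂ := by nlinarith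
  have hinner : 2 * (e * (ρ₁ * ρ₂)) ≤ ⟪x, y⟫ := by
    have h1 : ρ₁ / 2 * (ρ₂ / 2) ≤ ‖x‖ * ‖y‖ := by
      gcongr
      · linarith
      · linarith
    have h2 := mul_le_mul_of_nonneg_left (h1.trans hxy) he0.le
    have h3 : e * (16 * s * ⟪x, y⟫) = ⟪x, y⟫ / 8 := by linear_combination 16 * ⟪x, y⟫ * hes
    linarith
  have hxsq : (ρ₁ - e * ρ₂) ^ 2 ≤ ‖x‖ ^ 2 := by
    gcongr
    linarith
  have hysq : (ρ₂ - e * ρ₂) ^ 2 ≤ ‖y‖ ^ 2 := by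
    gcongr
    linarith
  have hmul : e * (ρ₂ * ρ₂) ≤ e * (ρ₁ * ρ₂) := by gcongr
  rw [norm_add_sq_real]
  nlinarith [sq_nonneg (e * ρ₂)]

/-- Fubini: if a set has sections of measure at least `a` over `s`, it has measure at least
`a * ν s`. -/
theorem mul_le_prod_of_le_section {α β : Type*} [MeasurableSpace α] [MeasurableSpace β]
    (μ : Measure α) (ν : Measure β) [SFinite μ] [SFinite ν] {G : Set (α × β)}
    (hG : MeasurableSet G) {s : Set β} (hs : MeasurableSet s) {a : ENNReal}
    (h : ∀ y ∈ s, a ≤ μ ((fun x ↦ (x, y)) ⁻¹' G)) : a * ν s ≤ μ.prod ν G := by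
  rw [Measure.prod_apply_symm hG, ← setLIntegral_const]
  exact (setLIntegral_mono' hs h).trans (setLIntegral_le_lintegral _ _)

variable {E : Type*} [NormedAddCommGroup E] [InnerProductSpace ℝ E] [FiniteDimensional ℝ E]
  [MeasurableSpace E] [BorelSpace E] (μ : Measure E) [μ.IsAddHaarMeasure]

/-- A central slab of a ball of half-width `r / (16 √n)`, where `n` is the dimension, fills at
most a quarter of the ball. -/
theorem measureReal_slab_le (hn : 0 < finrank ℝ E) {y : E} (hy : y ≠ 0) (r : ℝ) :
    4 * μ.real {x | ‖x‖ ≤ r ∧ 256 * finrank ℝ E * ⟪y, x⟫ ^ 2 ≤ r ^ 2 * ‖y‖ ^ 2} ≤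
      μ.real (closedBall 0 r) := by
  set n := finrank ℝ E
  have hn1 : (1 : ℝ) ≤ n := by exact_mod_cast hn
  have hy0 : 0 < ‖y‖ := norm_pos_iff.mpr hy
  set S : Set E := {x | ‖x‖ ≤ r ∧ 256 * n * ⟪y, x⟫ ^ 2 ≤ r ^ 2 * ‖y‖ ^ 2}
  set a : ℝ := 1 / (2 * n) with ha
  have ha0 : 0 < a := by positivity
  have hna : n * a = 1 / 2 := by rw [ha]; field_simp
  have ha2 : a ≤ 1 / 2 := by nlinarith
  -- stretch by `8` along `y`, then shrink by `1 - a`: the slab stays in the ball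
  set f : Dual ℝ E := (7 / ‖y‖ ^ 2) • (innerSL ℝ y).toLinearMap with hf
  set T : E →ₗ[ℝ] E := (1 - a) • LinearMap.transvection f y with hT
  have hfx (x : E) : f x = 7 / ‖y‖ ^ 2 * ⟪y, x⟫ := by simp [hf]
  have hdet : LinearMap.det T = (1 - a) ^ n * 8 := by
    rw [hT, LinearMap.det_smul, LinearMap.transvection.det, hfx, real_inner_self_eq_norm_sq]
    field_simp
    norm_num [n]
  have hpow : 1 / 2 ≤ (1 - a) ^ n := by
    have := one_add_mul_le_pow (a := -a) (by linarith) n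
    calc (1 / 2 : ℝ) = 1 + n * -a := by linarith
      _ ≤ _ := by simpa [sub_eq_add_neg] using this
  have hmaps : T '' S ⊆ closedBall 0 r := by
    rintro _ ⟨x, ⟨hxr, hx⟩, rfl⟩
    have hr : 0 ≤ r := (norm_nonneg x).trans hxr
    rw [mem_closedBall_zero_iff]
    refine abs_le_of_sq_le_sq' ?_ hr |>.2
    have hTx : T x = (1 - a) • (x + f x • y) := by
      simp [hT, LinearMap.transvection.apply]
    have hsq : ‖x + f x • y‖ ^ 2 = ‖x‖ ^ 2 + 63 * (⟪y, x⟫ ^ 2 / ‖y‖ ^ 2) := by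
      rw [norm_add_sq_real, norm_smul, inner_smul_right, real_inner_comm, hfx, mul_pow,
        Real.norm_eq_abs, sq_abs]
      field_simp
      ring
    have hq : ⟪y, x⟫ ^ 2 / ‖y‖ ^ 2 ≤ a * r ^ 2 / 128 := by
      rw [div_le_iff₀ (by positivity)]
      have := mul_le_mul_of_nonneg_left hx ha0.le
      have h2 : a * (256 * n * ⟪y, x⟫ ^ 2) = 128 * ⟪y, x⟫ ^ 2 := by
        linear_combination 256 * ⟪y, x⟫ ^ 2 * hna
      linarith
    have hbd : ‖x + f x • y‖ ^ 2 ≤ (1 + a / 2) * r ^ 2 := by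
      have : ‖x‖ ^ 2 ≤ r ^ 2 := by gcongr
      have : 0 ≤ a * r ^ 2 := by positivity
      rw [hsq]
      linarith
    have hcoef : (1 - a) ^ 2 * (1 + a / 2) ≤ 1 := by nlinarith [mul_pos ha0 ha0]
    rw [hTx, norm_smul, mul_pow, Real.norm_eq_abs, sq_abs]
    calc (1 - a) ^ 2 * ‖x + f x • y‖ ^ 2 ≤ (1 - a) ^ 2 * ((1 + a / 2) * r ^ 2) := by gcongr
      _ = (1 - a) ^ 2 * (1 + a / 2) * r ^ 2 := by ring
      _ ≤ r ^ 2 := mul_le_of_le_one_left (sq_nonneg r) hcoef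
  have himage : μ.real (T '' S) = (1 - a) ^ n * 8 * μ.real S := by
    rw [measureReal_def, Measure.addHaar_image_linearMap, hdet, ENNReal.toReal_mul,
      abs_of_nonneg (by positivity), ENNReal.toReal_ofReal (by positivity), measureReal_def]
  calc 4 * μ.real S ≤ (1 - a) ^ n * 8 * μ.real S := by
        gcongr
        linarith
    _ = μ.real (T '' S) := himage.symm
    _ ≤ _ := measureReal_mono hmaps measure_closedBall_lt_top.ne

/-- The cone of vectors making an angle at most `arccos (1 / (16 √n))` with `y`, where `n` is
the dimension, fills at least `3 / 8` of each centred ball. -/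
theorem le_measureReal_cone_inter_closedBall (hn : 0 < finrank ℝ E) {y : E} (hy : y ≠ 0)
    (r : ℝ) :
    3 / 8 * μ.real (closedBall 0 r) ≤
      μ.real ({x | ‖x‖ * ‖y‖ ≤ 16 * √(finrank ℝ E) * ⟪x, y⟫} ∩ closedBall 0 r) := by
  set n := finrank ℝ E
  set K : Set E := {x | ‖x‖ * ‖y‖ ≤ 16 * √n * ⟪x, y⟫}
  set S : Set E := {x | ‖x‖ ≤ r ∧ 256 * n * ⟪y, x⟫ ^ 2 ≤ r ^ 2 * ‖y‖ ^ 2}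
  have hS : 4 * μ.real S ≤ μ.real (closedBall 0 r) := measureReal_slab_le μ hn hy r
  have hfin : μ (K ∩ closedBall 0 r) ≠ ⊤ :=
    measure_ne_top_of_subset inter_subset_right measure_closedBall_lt_top.ne
  have hSsub : S ⊆ closedBall 0 r := fun x hx ↦ mem_closedBall_zero_iff.mpr hx.1
  have hSfin : μ S ≠ ⊤ := measure_ne_top_of_subset hSsub measure_closedBall_lt_top.ne
  have hneg : μ.real (-(K ∩ closedBall 0 r)) = μ.real (K ∩ closedBall 0 r) := by
    rw [measureReal_def, Measure.measure_neg, measureReal_def]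
  have hcover : closedBall 0 r ⊆ (K ∩ closedBall 0 r ∪ -(K ∩ closedBall 0 r)) ∪ S := by
    intro x hx
    have hxr : ‖x‖ ≤ r := mem_closedBall_zero_iff.mp hx
    by_cases h1 : ‖x‖ * ‖y‖ ≤ 16 * √n * ⟪x, y⟫
    · exact .inl (.inl ⟨h1, hx⟩)
    by_cases h2 : ‖x‖ * ‖y‖ ≤ 16 * √n * -⟪x, y⟫
    · refine .inl (.inr ⟨?_, by simpa using hxr⟩)
      simpa [K] using h2
    refine .inr ⟨hxr, ?_⟩
    have habs : (16 * √n * ⟪x, y⟫) ^ 2 ≤ (‖x‖ * ‖y‖) ^ 2 := by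
      apply sq_le_sq'
      · linarith
      · linarith
    rw [mul_pow, mul_pow, Real.sq_sqrt (Nat.cast_nonneg n), mul_pow, real_inner_comm] at habs
    calc 256 * n * ⟪y, x⟫ ^ 2 ≤ ‖x‖ ^ 2 * ‖y‖ ^ 2 := by linarith
      _ ≤ r ^ 2 * ‖y‖ ^ 2 := by gcongr
  have hle := (measureReal_mono (μ := μ) hcover (by
    simp only [ne_eq, measure_union_eq_top_iff, Measure.measure_neg, not_or]
    exact ⟨⟨hfin, hfin⟩, hSfin⟩)).trans (measureReal_union_le _ _)
  have hle' := measureReal_union_le (μ := μ) (K ∩ closedBall 0 r) (-(K ∩ closedBall 0 r))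
  linarith

/-- The part of a cone lying in the outer shell of relative thickness `δ` of a centred ball. -/
theorem le_measureReal_cone_inter_shell {K : Set E} (hK : MeasurableSet K)
    (hcone : ∀ t : ℝ, 0 < t → ∀ x ∈ K, t • x ∈ K) {r δ : ℝ} (hδ : 0 ≤ δ) (hδ1 : δ < 1)
    (hr : 0 ≤ r) :
    finrank ℝ E * δ / (1 + finrank ℝ E * δ) * μ.real (K ∩ closedBall 0 r) ≤
      μ.real (K ∩ (closedBall 0 r \ closedBall 0 ((1 - δ) * r))) := by
  set n := finrank ℝ E
  have h1δ : 0 < 1 - δ := by linarith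
  have hscale : K ∩ closedBall 0 ((1 - δ) * r) = (1 - δ) • (K ∩ closedBall 0 r) := by
    ext x
    rw [mem_smul_set_iff_inv_smul_mem₀ h1δ.ne']
    simp only [mem_inter_iff, mem_closedBall_zero_iff, norm_smul, norm_inv, Real.norm_eq_abs,
      abs_of_pos h1δ, inv_mul_le_iff₀ h1δ]
    refine and_congr_left fun _ ↦ ⟨hcone _ (inv_pos.mpr h1δ) x, fun h ↦ ?_⟩
    simpa [smul_smul, h1δ.ne'] using hcone _ h1δ _ h
  have hmeas : μ.real (K ∩ closedBall 0 ((1 - δ) * r)) =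
      (1 - δ) ^ n * μ.real (K ∩ closedBall 0 r) := by
    rw [hscale, measureReal_def, Measure.addHaar_smul, ENNReal.toReal_mul,
      abs_of_nonneg (by positivity), ENNReal.toReal_ofReal (by positivity), measureReal_def]
  have hdiff : K ∩ (closedBall 0 r \ closedBall 0 ((1 - δ) * r)) =
      (K ∩ closedBall 0 r) \ (K ∩ closedBall 0 ((1 - δ) * r)) := by
    ext x
    simp only [mem_inter_iff, mem_sdiff]
    tauto
  have hsub : K ∩ closedBall 0 ((1 - δ) * r) ⊆ K ∩ closedBall 0 r :=
    inter_subset_inter_right _ (closedBall_subset_closedBall (by nlinarith))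
  rw [hdiff, measureReal_sdiff hsub (hK.inter measurableSet_closedBall)
    (measure_ne_top_of_subset inter_subset_right measure_closedBall_lt_top.ne), hmeas]
  have hpow : (1 - δ) ^ n * (1 + n * δ) ≤ 1 := by
    calc (1 - δ) ^ n * (1 + n * δ) ≤ (1 - δ) ^ n * (1 + δ) ^ n := by
          gcongr
          exact one_add_mul_le_pow (by linarith) n
      _ = (1 - δ ^ 2) ^ n := by rw [← mul_pow]; ring
      _ ≤ 1 := pow_le_one₀ (by nlinarith) (by nlinarith)
  have hfrac : n * δ / (1 + n * δ) ≤ 1 - (1 - δ) ^ n := by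
    rw [div_le_iff₀ (by positivity)]
    linarith
  calc _ ≤ (1 - (1 - δ) ^ n) * μ.real (K ∩ closedBall 0 r) := by gcongr
    _ = _ := by ring

/-- A pair of points of two balls has a long sum with probability at least of order
`min (ρ₂ / ρ₁ * √n) 1`. -/
theorem measureReal_setOf_norm_add_le (hn : 0 < finrank ℝ E) {ρ₁ ρ₂ R : ℝ} (hρ₂ : 0 < ρ₂)
    (hρ : ρ₂ ≤ ρ₁) (hR : R < √(ρ₁ ^ 2 + ρ₂ ^ 2)) :
    (μ.prod μ).real {p : E × E | ‖p.1‖ ≤ ρ₁ ∧ ‖p.2‖ ≤ ρ₂ ∧ ‖p.1 + p.2‖ ≤ R} ≤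
      (1 - 1 / 129 * (3 / 8) * (1 / 129) * min (ρ₂ / ρ₁ * √(finrank ℝ E)) 1) *
        (μ.real (closedBall 0 ρ₁) * μ.real (closedBall 0 ρ₂)) := by
  have hρ₁ : 0 < ρ₁ := hρ₂.trans_le hρ
  set n := finrank ℝ E with hn_def
  set s : ℝ := √n
  have hs : 1 ≤ s := Real.one_le_sqrt.mpr (by exact_mod_cast hn)
  have hsn : s * s = n := Real.mul_self_sqrt (Nat.cast_nonneg n)
  set δ : ℝ := ρ₂ / (128 * s * ρ₁) with hδ_def
  set η : ℝ := 1 / (128 * s) with hη_def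
  set m : ℝ := ρ₂ / ρ₁ * s with hm_def
  have hδ0 : 0 < δ := by positivity
  have hη0 : 0 < η := by positivity
  have hm0 : 0 < m := by positivity
  have hδ1 : δ < 1 := by
    rw [hδ_def, div_lt_one (by positivity)]
    nlinarith
  have hη1 : η < 1 := by
    rw [hη_def, div_lt_one (by positivity)]
    linarith
  have hnδ : n * δ = m / 128 := by
    rw [← hsn, hδ_def, hm_def]
    field_simp
  have hnη : n * η = s / 128 := by
    rw [← hsn, hη_def]
    field_simp
  set Θ : Set (E × E) := {p | ‖p.1‖ ≤ ρ₁ ∧ ‖p.2‖ ≤ ρ₂ ∧ ‖p.1 + p.2‖ ≤ R}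
  set A₁ : Set E := closedBall 0 ρ₁ \ closedBall 0 ((1 - δ) * ρ₁)
  set A₂ : Set E := closedBall 0 ρ₂ \ closedBall 0 ((1 - η) * ρ₂)
  set C : Set (E × E) := {p | ‖p.1‖ * ‖p.2‖ ≤ 16 * s * ⟪p.1, p.2⟫}
  set G : Set (E × E) := C ∩ A₁ ×ˢ A₂
  have hA₁ : MeasurableSet A₁ := measurableSet_closedBall.diff measurableSet_closedBall
  have hA₂ : MeasurableSet A₂ := measurableSet_closedBall.diff measurableSet_closedBall
  have hC : MeasurableSet C := measurableSet_le (by fun_prop) (by fun_prop)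
  have hG : MeasurableSet G := hC.inter (hA₁.prod hA₂)
  set V₁ := μ.real (closedBall (0 : E) ρ₁)
  set V₂ := μ.real (closedBall (0 : E) ρ₂)
  have hV₁ : 0 ≤ V₁ := measureReal_nonneg
  have hV₂ : 0 ≤ V₂ := measureReal_nonneg
  have hA₂_le : 1 / 129 * V₂ ≤ μ.real A₂ := by
    have h := le_measureReal_cone_inter_shell μ (K := univ) MeasurableSet.univ (by simp)
      hη0.le hη1 hρ₂.le
    rw [univ_inter, univ_inter, ← hn_def, hnη] at h
    refine le_trans ?_ h
    gcongr ?_ * _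
    rw [div_le_div_iff₀ (by norm_num) (by positivity)]
    linarith
  have hsection (y : E) (hy : y ∈ A₂) :
      1 / 129 * min m 1 * (3 / 8 * V₁) ≤ μ.real ((fun x ↦ (x, y)) ⁻¹' G) := by
    have hy0 : y ≠ 0 := by
      rintro rfl
      exact hy.2 (mem_closedBall_self (by nlinarith))
    have hKm : MeasurableSet {x : E | ‖x‖ * ‖y‖ ≤ 16 * s * ⟪x, y⟫} :=
      measurableSet_le (by fun_prop) (by fun_prop)
    have h := le_measureReal_cone_inter_shell μ hKm (fun t ht x hx ↦ by
      simp only [mem_ofPred_eq, norm_smul, Real.norm_eq_abs, abs_of_pos ht,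
        real_inner_smul_left] at hx ⊢
      nlinarith) hδ0.le hδ1 hρ₁.le
    have hset : (fun x ↦ (x, y)) ⁻¹' G =
        {x : E | ‖x‖ * ‖y‖ ≤ 16 * s * ⟪x, y⟫} ∩ A₁ := by
      ext x
      simp [G, C, hy]
    rw [hset]
    refine le_trans ?_ h
    rw [← hn_def, hnδ]
    gcongr ?_ * ?_
    · rw [le_div_iff₀ (by positivity)]
      rcases le_total m 1 with hm | hm
      · rw [min_eq_left hm]
        nlinarith
      · rw [min_eq_right hm]
        linarith
    · exact le_measureReal_cone_inter_closedBall μ hn hy0 ρ₁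
  have hball : (μ.prod μ).real (closedBall 0 ρ₁ ×ˢ closedBall 0 ρ₂) = V₁ * V₂ :=
    measureReal_prod_prod _ _
  have hballfin : μ.prod μ (closedBall (0 : E) ρ₁ ×ˢ closedBall (0 : E) ρ₂) ≠ ⊤ := by
    rw [Measure.prod_prod]
    exact ENNReal.mul_ne_top measure_closedBall_lt_top.ne measure_closedBall_lt_top.ne
  have hGsub : G ⊆ closedBall 0 ρ₁ ×ˢ closedBall 0 ρ₂ := fun p hp ↦ ⟨hp.2.1.1, hp.2.2.1⟩
  have hGle : 1 / 129 * min m 1 * (3 / 8 * V₁) * μ.real A₂ ≤ (μ.prod μ).real G := by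
    have h := mul_le_prod_of_le_section μ μ hG hA₂
      (a := ENNReal.ofReal (1 / 129 * min m 1 * (3 / 8 * V₁))) fun y hy ↦
        ENNReal.ofReal_le_of_le_toReal (hsection y hy)
    have h' := ENNReal.toReal_mono (measure_ne_top_of_subset hGsub hballfin) h
    rwa [ENNReal.toReal_mul, ENNReal.toReal_ofReal (by positivity)] at h'
  have hΘ : Θ ⊆ (closedBall 0 ρ₁ ×ˢ closedBall 0 ρ₂) \ G := by
    rintro ⟨x, y⟩ ⟨hx, hy, hxy⟩
    refine ⟨⟨by simpa using hx, by simpa using hy⟩, fun ⟨hc, hxA, hyA⟩ ↦ ?_⟩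
    have hx' : (1 - δ) * ρ₁ ≤ ‖x‖ := by
      simpa using (not_le.mp fun h ↦ hxA.2 (mem_closedBall_zero_iff.mpr h)).le
    have hy' : (1 - η) * ρ₂ ≤ ‖y‖ := by
      simpa using (not_le.mp fun h ↦ hyA.2 (mem_closedBall_zero_iff.mpr h)).le
    have := Real.sqrt_le_left (norm_nonneg (x + y)) |>.mpr
      (add_sq_le_norm_add_sq hρ₂ hρ hs hx' hy' hc)
    exact absurd (hxy.trans_lt hR) this.not_gt
  have hle := measureReal_mono (μ := μ.prod μ) hΘ
    (measure_ne_top_of_subset sdiff_subset hballfin)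
  rw [measureReal_sdiff hGsub hG hballfin, hball] at hle
  have hfinal : 1 / 129 * min m 1 * (3 / 8 * V₁) * (1 / 129 * V₂) ≤
      1 / 129 * min m 1 * (3 / 8 * V₁) * μ.real A₂ := by gcongr
  linarith

/-- Extended-nonnegative-real form of `measureReal_setOf_norm_add_le`. -/
theorem measure_setOf_norm_add_le (hn : 0 < finrank ℝ E) {ρ₁ ρ₂ R : ℝ} (hρ₂ : 0 < ρ₂)
    (hρ : ρ₂ ≤ ρ₁) (hR : R < √(ρ₁ ^ 2 + ρ₂ ^ 2)) :
    μ.prod μ {p : E × E | ‖p.1‖ ≤ ρ₁ ∧ ‖p.2‖ ≤ ρ₂ ∧ ‖p.1 + p.2‖ ≤ R} ≤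
      ENNReal.ofReal (1 - 1 / 129 * (3 / 8) * (1 / 129) * min (ρ₂ / ρ₁ * √(finrank ℝ E)) 1) *
        (μ (closedBall 0 ρ₁) * μ (closedBall 0 ρ₂)) := by
  have h := measureReal_setOf_norm_add_le μ hn hρ₂ hρ hR
  have hfin (r : ℝ) : μ (closedBall (0 : E) r) ≠ ⊤ := measure_closedBall_lt_top.ne
  have hsub : {p : E × E | ‖p.1‖ ≤ ρ₁ ∧ ‖p.2‖ ≤ ρ₂ ∧ ‖p.1 + p.2‖ ≤ R} ⊆
      closedBall 0 ρ₁ ×ˢ closedBall 0 ρ₂ :=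
    fun p hp ↦ ⟨mem_closedBall_zero_iff.mpr hp.1, mem_closedBall_zero_iff.mpr hp.2.1⟩
  have hΘfin : μ.prod μ {p : E × E | ‖p.1‖ ≤ ρ₁ ∧ ‖p.2‖ ≤ ρ₂ ∧ ‖p.1 + p.2‖ ≤ R} ≠ ⊤ := by
    refine measure_ne_top_of_subset hsub ?_
    rw [Measure.prod_prod]
    exact ENNReal.mul_ne_top (hfin _) (hfin _)
  set κ : ℝ := 1 - 1 / 129 * (3 / 8) * (1 / 129) * min (ρ₂ / ρ₁ * √(finrank ℝ E)) 1 with hκ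
  have hκ0 : 0 ≤ κ := by
    have := min_le_right (ρ₂ / ρ₁ * √(finrank ℝ E)) 1
    rw [hκ]
    linarith
  rw [← ENNReal.ofReal_toReal hΘfin, ← ENNReal.ofReal_toReal (hfin ρ₁),
    ← ENNReal.ofReal_toReal (hfin ρ₂), ← ENNReal.ofReal_mul ENNReal.toReal_nonneg,
    ← ENNReal.ofReal_mul hκ0]
  exact ENNReal.ofReal_le_ofReal h

end ConeBounds

/-- The general-radii form of Lemma 1.3: for `ρ₁ ≥ ρ₂ > 0`, `ρ = ρ₂/ρ₁`, and
`R < (ρ₁² + ρ₂²)^{1/2}`, the set of pairs `(x, y)` with `|x| ≤ ρ₁`, `|y| ≤ ρ₂`,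
`|x + y| ≤ R` occupies a proportion at most `1 - c·min{ρ√n, 1}` of
`ρ₁Bⁿ × ρ₂Bⁿ`. -/
theorem volume_theta_upper_bound_general :
    ∃ c : ℝ, 0 < c ∧
      ∀ (n : ℕ), 0 < n →
      ∀ (ρ₁ ρ₂ : ℝ), 0 < ρ₂ → ρ₂ ≤ ρ₁ →
      ∀ (R : ℝ), 0 < R → R < Real.sqrt (ρ₁ ^ 2 + ρ₂ ^ 2) →
        volume {p : EuclideanSpace ℝ (Fin n) × EuclideanSpace ℝ (Fin n) |
            ‖p.1‖ ≤ ρ₁ ∧ ‖p.2‖ ≤ ρ₂ ∧ ‖p.1 + p.2‖ ≤ R}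
          ≤ ENNReal.ofReal (1 - c * min (ρ₂ / ρ₁ * Real.sqrt n) 1) *
            (volume (Metric.closedBall (0 : EuclideanSpace ℝ (Fin n)) ρ₁) *
              volume (Metric.closedBall (0 : EuclideanSpace ℝ (Fin n)) ρ₂)) := by
  refine ⟨1 / 129 * (3 / 8) * (1 / 129), by norm_num, fun n hn ρ₁ ρ₂ hρ₂ hρ R _ hR ↦ ?_⟩
  have h := measure_setOf_norm_add_le (volume : Measure (EuclideanSpace ℝ (Fin n)))
    (by rwa [finrank_euclideanSpace_fin]) hρ₂ hρ hR
  rwa [finrank_euclideanSpace_fin] at h
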